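/- arXiv:1906.10314 — 2 statements merged into one kernel-verified Lean document; each statement's English description precedes it below -/
import Mathlib

section
/- Let 2 ≤ k ≤ d ≤ d' be integers with k dividing d'. Then for every integer i with 1 ≤ i ≤ k−1 and d−i ≥ k, there exists a d'(d−i)-number USV1Bk in M_{d×d'}; moreover one can be chosen consisting of matrices supported on the first d−i rows. Equivalently, there is a d'(d−i)-number special unextendible entangled basis with Schmidt number k (SUEBk) in ℂ^d ⊗ ℂ^{d'}. -/
/-!
Write `p = d - i` and split the `d'` columns into `q = d' / k` blocks of `k` columns. For a block,
a cyclic shift `s` modulo `p` and a row `t` of the Fourier matrix of order `k`, take the matrix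
whose `c`-th column in the block has the single nonzero entry `ω ^ (t * c)`, in row `(c + s) % p`.
Since `k ≤ p`, these `k` entries lie in distinct rows, so the matrix is a partial isometry of
rank `k`. Different shifts have disjoint supports, different blocks as well, and for the same block
and shift orthogonality is that of the Fourier matrix. There are `q * p * k = d' * p` of them, so
they span all matrices supported on the first `p` rows. A matrix orthogonal to all of them lives on
the last `i` rows, and its rank is at most `i < k`.
-/

open Matrix

/-- `A` is a `k`-singular-value-1 matrix. -/
def IsSV1 {m n : Type*} [Fintype m] [Fintype n] (k : ℕ) (A : Matrix m n ℂ) : Prop :=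
  (Aᴴ * A) * (Aᴴ * A) = Aᴴ * A ∧ A.rank = k

/-- Existence of a complex Hadamard matrix of order `k`: the Fourier matrix. -/
lemma exists_fourier (k : ℕ) (hk : k ≠ 0) : ∃ φ : Fin k → Fin k → ℂ,
    (∀ t c, star (φ t c) * φ t c = 1) ∧
    ∀ t t', ∑ c, star (φ t c) * φ t' c = if t = t' then (k : ℂ) else 0 := by
  have hω := Complex.isPrimitiveRoot_exp k hk
  set ω := Complex.exp (2 * Real.pi * Complex.I / k)
  have hu : star ω * ω = 1 := by
    have h := hω.norm'_eq_one hk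
    rw [Complex.star_def, Complex.conj_mul', h]; simp
  have hu' : ∀ a : ℕ, star ω ^ a * ω ^ a = 1 := fun a => by rw [← mul_pow, hu, one_pow]
  refine ⟨fun t c => ω ^ ((t : ℕ) * c), fun t c => by rw [star_pow, hu'], fun t t' => ?_⟩
  have hz : ∀ c : Fin k, star (ω ^ ((t : ℕ) * c)) * ω ^ ((t' : ℕ) * c)
      = (star ω ^ (t : ℕ) * ω ^ (t' : ℕ)) ^ (c : ℕ) := fun c => by
    rw [star_pow, mul_pow, pow_mul, pow_mul]
  simp_rw [hz]
  rw [Fin.sum_univ_eq_sum_range (fun c => (star ω ^ (t : ℕ) * ω ^ (t' : ℕ)) ^ c)]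
  split_ifs with h
  · subst h
    simp only [hu', one_pow, Finset.sum_const, Finset.card_range, nsmul_eq_mul, mul_one]
  · have hne : star ω ^ (t : ℕ) * ω ^ (t' : ℕ) ≠ 1 := by
      intro h1
      apply h
      apply Fin.ext
      refine hω.pow_inj t.2 t'.2 ?_
      calc ω ^ (t : ℕ) = ω ^ (t : ℕ) * (star ω ^ (t : ℕ) * ω ^ (t' : ℕ)) := by rw [h1, mul_one]
        _ = (star ω ^ (t : ℕ) * ω ^ (t : ℕ)) * ω ^ (t' : ℕ) := by ring
        _ = _ := by rw [hu', one_mul]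
    rw [geom_sum_eq hne, mul_pow, ← pow_mul, ← pow_mul, mul_comm (t : ℕ), mul_comm (t' : ℕ),
      pow_mul, pow_mul, ← star_pow, hω.pow_eq_one]
    simp

/-- An orthogonal system of `N` vectors of squared norm `k ≠ 0` in `ℂ ^ N` is complete. -/
lemma eq_zero_of_orthogonal {N k : ℕ} (hk : k ≠ 0) (ψ : Fin N → Fin N → ℂ)
    (h : ∀ n n', ∑ c, star (ψ n c) * ψ n' c = if n = n' then (k : ℂ) else 0)
    (v : Fin N → ℂ) (hv : ∀ n, ∑ c, star (ψ n c) * v c = 0) : v = 0 := by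
  let M : Matrix (Fin N) (Fin N) ℂ := Matrix.of fun n c => star (ψ n c)
  have hM : M * ((k : ℂ)⁻¹ • Mᴴ) = 1 := by
    have hk' : (k : ℂ) ≠ 0 := Nat.cast_ne_zero.2 hk
    ext n n'
    rw [Matrix.mul_smul, Matrix.smul_apply, Matrix.mul_apply, Matrix.one_apply]
    simp only [M, Matrix.conjTranspose_apply, Matrix.of_apply, star_star, h]
    split_ifs <;> simp [hk']
  have hM' := mul_eq_one_comm.1 hM
  have hv' : M *ᵥ v = 0 := by
    ext n
    exact hv n
  calc v = (((k : ℂ)⁻¹ • Mᴴ) * M) *ᵥ v := by rw [hM', Matrix.one_mulVec]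
    _ = 0 := by rw [← Matrix.mulVec_mulVec, hv', Matrix.mulVec_zero]

/-- A matrix whose rows of index less than `d - i` vanish factors through `ℂ ^ i`. -/
lemma rank_le_of_rows_zero {d d' i : ℕ} (B : Matrix (Fin d) (Fin d') ℂ)
    (hi : i ≤ d) (hB : ∀ (r : Fin d) c, (r : ℕ) < d - i → B r c = 0) : B.rank ≤ i := by
  let C : Matrix (Fin d) (Fin i) ℂ := Matrix.of fun r j => if (r : ℕ) = d - i + j then 1 else 0
  let D : Matrix (Fin i) (Fin d') ℂ := Matrix.of fun j c => B ⟨d - i + j, by omega⟩ c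
  have hCD : B = C * D := by
    ext r c
    simp only [C, D, Matrix.mul_apply, Matrix.of_apply, ite_mul, one_mul, zero_mul]
    by_cases hr : (r : ℕ) < d - i
    · rw [hB r c hr, Finset.sum_eq_zero]
      intro j _
      rw [if_neg (by omega)]
    · rw [Finset.sum_eq_single (⟨r - (d - i), by omega⟩ : Fin i)]
      · rw [if_pos (by simp; omega)]
        congr 1
        apply Fin.ext
        simp
        omega
      · intro j _ hj
        rw [if_neg]
        intro h
        exact hj (Fin.ext (by simp; omega))
      · simp
  rw [hCD]
  exact (Matrix.rank_mul_le_left C D).trans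
    ((Matrix.rank_le_card_width C).trans (by simp))

/-- The matrix whose column `c` has the single entry `w c`, in row `f c`. -/
def colMat {d d' : ℕ} (f : Fin d' → Fin d) (w : Fin d' → ℂ) : Matrix (Fin d) (Fin d') ℂ :=
  Matrix.of fun r c => if r = f c then w c else 0

lemma colMat_mul_apply {d d' : ℕ} (f : Fin d' → Fin d) (w : Fin d' → ℂ)
    (B : Matrix (Fin d) (Fin d') ℂ) (c c' : Fin d') :
    ((colMat f w)ᴴ * B) c c' = star (w c) * B (f c) c' := by
  rw [Matrix.mul_apply, Finset.sum_eq_single (f c)]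
  · simp [colMat]
  · intro r _ hr
    simp [colMat, hr]
  · simp

/-- Case (3): let `2 ≤ k ≤ d ≤ d'` with `k ∣ d'`. For every `i` with
`1 ≤ i ≤ k-1` and `d-i ≥ k` there is a `d'(d-i)`-number USV1Bk in `M_{d×d'}`,
consisting of matrices supported on the first `d-i` rows. -/
theorem case3_SUEBk (k d d' : ℕ) (hk : 2 ≤ k) (hkd : k ≤ d) (hdd : d ≤ d')
    (hdvd : k ∣ d') (i : ℕ) (hi1 : 1 ≤ i) (hi2 : i ≤ k - 1) (hi3 : k ≤ d - i) :
    ∃ A : Fin (d' * (d - i)) → Matrix (Fin d) (Fin d') ℂ,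
      (∀ m, IsSV1 k (A m)) ∧
      (∀ m n, ((A m)ᴴ * A n).trace = if m = n then (k : ℂ) else 0) ∧
      (∀ B : Matrix (Fin d) (Fin d') ℂ,
        (∀ m, ((A m)ᴴ * B).trace = 0) → ¬ IsSV1 k B) ∧
      (∀ m (r : Fin d) (c : Fin d'), d - i ≤ (r : ℕ) → A m r c = 0) := by
  obtain ⟨q, hq⟩ := hdvd
  obtain ⟨φ, hφ1, hφ2⟩ := exists_fourier k (by omega)
  -- A column is a pair: its position inside its block, and its block.
  obtain ⟨e⟩ : Nonempty (Fin d' ≃ Fin k × Fin q) :=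
    ⟨(finCongr hq).trans finProdFinEquiv.symm⟩
  let g : Fin (d' * (d - i)) ≃ Fin d' × Fin (d - i) := finProdFinEquiv.symm
  let ψ : Fin d' → Fin d' → ℂ := fun n c =>
    if (e c).2 = (e n).2 then φ (e n).1 (e c).1 else 0
  have hψ : ∀ n n', ∑ c, star (ψ n c) * ψ n' c = if n = n' then (k : ℂ) else 0 := by
    intro n n'
    rw [← e.symm.sum_comp, Fintype.sum_prod_type_right]
    simp only [ψ, Equiv.apply_symm_apply]
    rw [Finset.sum_eq_single (e n).2]
    · by_cases h2 : (e n).2 = (e n').2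
      · simp only [h2, if_true, hφ2]
        congr 1
        rw [← e.apply_eq_iff_eq, Prod.ext_iff]
        simp [h2]
      · have hn : n ≠ n' := fun h => h2 (by rw [h])
        simp [h2, hn]
    · intro b _ hb
      simp [hb]
    · simp
  have hp : 0 < d - i := by omega
  let f : Fin (d - i) → Fin d' → Fin d := fun s c =>
    ⟨(((e c).1 : ℕ) + s) % (d - i), by have := Nat.mod_lt (((e c).1 : ℕ) + s) hp; omega⟩
  have hf_lt : ∀ s c, (f s c : ℕ) < d - i := fun s c => Nat.mod_lt _ hp
  have hf_shift : ∀ s s' c, f s c = f s' c → s = s' := by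
    intro s s' c h
    have h1 : ((e c).1 : ℕ) + s ≡ (e c).1 + s' [MOD (d - i)] := congrArg Fin.val h
    exact Fin.ext ((Nat.ModEq.add_left_cancel' _ h1).eq_of_lt_of_lt s.2 s'.2)
  have hf_inj : ∀ s c c', (e c).2 = (e c').2 → f s c = f s c' → c = c' := by
    intro s c c' h2 h
    have h1 : ((e c).1 : ℕ) + s ≡ (e c').1 + s [MOD (d - i)] := congrArg Fin.val h
    have h3 := (Nat.ModEq.add_right_cancel' _ h1).eq_of_lt_of_lt
      ((e c).1.2.trans_le hi3) ((e c').1.2.trans_le hi3)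
    exact e.injective (Prod.ext (Fin.ext h3) h2)
  have hf_surj : ∀ (r : Fin d) c, (r : ℕ) < d - i → ∃ s, f s c = r := by
    intro r c hr
    -- An injective self-map of `Fin (d - i)` is surjective.
    have hs : Function.Surjective (fun s => (⟨f s c, hf_lt s c⟩ : Fin (d - i))) :=
      Finite.surjective_of_injective fun s s' h =>
        hf_shift s s' c (Fin.ext (congrArg (fun x : Fin (d - i) => (x : ℕ)) h))
    obtain ⟨s, h⟩ := hs ⟨r, hr⟩
    exact ⟨s, Fin.ext (congrArg (fun x : Fin (d - i) => (x : ℕ)) h)⟩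
  refine ⟨fun m => colMat (f (g m).2) (ψ (g m).1), fun m => ?_, fun m n => ?_, fun B hB => ?_,
    fun m r c hr => ?_⟩
  · beta_reduce
    generalize (g m).1 = n
    generalize (g m).2 = s
    -- The Gram matrix is the projection onto the coordinates of one block.
    have hD : (colMat (f s) (ψ n))ᴴ * colMat (f s) (ψ n)
        = Matrix.diagonal fun c => if (e c).2 = (e n).2 then (1 : ℂ) else 0 := by
      ext c c'
      rw [colMat_mul_apply, Matrix.diagonal_apply]
      by_cases hc : (e c).2 = (e n).2
      · by_cases hcc : c = c'
        · subst hcc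
          have := hφ1 (e n).1 (e c).1
          simp only [colMat, Matrix.of_apply, ψ, hc, if_true]
          exact this
        · by_cases hc' : (e c').2 = (e n).2
          · rw [colMat, Matrix.of_apply, if_neg fun h => hcc (hf_inj s c c' (hc.trans hc'.symm) h)]
            simp [hcc]
          · simp [colMat, ψ, hcc, hc']
      · simp [ψ, hc]
    refine ⟨?_, ?_⟩
    · rw [hD, Matrix.diagonal_mul_diagonal]
      congr 1
      ext c
      split_ifs <;> simp
    · open ComplexOrder in
      rw [← Matrix.rank_conjTranspose_mul_self, hD, Matrix.rank_diagonal]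
      have : {c // (if (e c).2 = (e n).2 then (1 : ℂ) else 0) ≠ 0} ≃ Fin k :=
        { toFun := fun c => (e c).1
          invFun := fun t => ⟨e.symm (t, (e n).2), by simp⟩
          left_inv := by
            rintro ⟨c, hc⟩
            have hc' : (e c).2 = (e n).2 := by
              by_contra h
              simp [h] at hc
            apply Subtype.ext
            apply e.injective
            simp [← hc']
          right_inv := fun t => by simp }
      rw [Fintype.card_congr this, Fintype.card_fin]
  · simp only [Matrix.trace, Matrix.diag, colMat_mul_apply]
    by_cases hs : (g m).2 = (g n).2
    · simp only [hs, colMat, Matrix.of_apply, if_true, hψ]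
      congr 1
      rw [← g.apply_eq_iff_eq, Prod.ext_iff]
      simp [hs]
    · have hmn : m ≠ n := fun h => hs (by rw [h])
      rw [if_neg hmn]
      refine Finset.sum_eq_zero fun c _ => ?_
      rw [colMat, Matrix.of_apply, if_neg fun h => hs (hf_shift _ _ c h), mul_zero]
  · have hz : ∀ (r : Fin d) c, (r : ℕ) < d - i → B r c = 0 := by
      intro r c hr
      obtain ⟨s, rfl⟩ := hf_surj r c hr
      refine congrFun (eq_zero_of_orthogonal (k := k) (by omega) ψ hψ (fun c => B (f s c) c)
        fun n => ?_) c
      have := hB (g.symm (n, s))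
      simpa only [Matrix.trace, Matrix.diag, colMat_mul_apply, Equiv.apply_symm_apply] using this
    have := rank_le_of_rows_zero B (by omega) hz
    rintro ⟨-, h⟩
    omega
  · have := hf_lt (g m).2 c
    have hne : r ≠ f (g m).2 c := fun h => by rw [h] at hr; omega
    simp [colMat, hne]
end

section
/- Let 2 ≤ k ≤ d ≤ d' be integers with k dividing d·d', let 1 ≤ p ≤ q be integers, and let N < d·d'. Suppose {A_j}_{j=1}^{N} is a family of k-singular-value-1 matrices in M_{d×d'} with Tr(A_iᴴ A_j) = k·δ_{ij} for all i, j, and with the stronger unextendibility property that every B ∈ M_{d×d'} satisfying Tr(A_jᴴ B) = 0 for all j has rank B < k (this property holds for all the SUEBk constructions of Section 3 of the paper). Then there exists a (p·q·d·d' − p·(d·d' − N))-number USV1B(pk) in M_{pd×qd'}. Equivalently, there is a (pqdd' − p(dd'−N))-number special unextendible entangled basis with Schmidt number pk (SUEB(pk)) in ℂ^{pd} ⊗ ℂ^{qd'}. -/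
/-!
The matrices are built as Kronecker products. For `1 ≤ k ≤ d ≤ d'` with `k ∣ d * d'`, the
`d × d'` grid splits into partial matchings of `k` cells (`exists_partition`). Putting the rows of
the Fourier matrix of order `k` on each matching gives an orthogonal basis `E` of the `d × d'`
matrices consisting of `k`-singular-value-1 matrices (`phased_idem`, `phased_orth`,
`phased_span`). The same construction with `(p, p, q)` in place of `(k, d, d')` gives an
orthogonal basis `W s m` (`s < q`, `m < p`) of the `p × q` matrices, the first index naming the
matching.

Distinguish one matching `s₀` of the `p × q` grid. The family consists of `W s₀ m ⊗ A j` together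
with all `W s m ⊗ E b l` for `s ≠ s₀`; there are `p * N + p * (q - 1) * d * d'` of these. By
Fourier inversion over `m`, a matrix `B` orthogonal to the family has zero `d × d'` blocks off the
matching `s₀`, and its `p` blocks on `s₀` are orthogonal to every `A j`, hence of rank `< k`.
Rank is subadditive, so `B` has rank `< p * k`.

Idempotency of `Cᴴ * C` passes to Kronecker products, and the rank of an idempotent is its trace,
so the ranks are read off from the orthogonality relations.
-/

open Matrix

open scoped Kronecker

/-! ### Rank and trace -/

/-- The rank of an idempotent complex matrix equals its trace. -/
lemma trace_eq_rank_of_idem {n : Type*} [Fintype n] [DecidableEq n] (P : Matrix n n ℂ)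
    (h : P * P = P) : P.trace = (P.rank : ℂ) := by
  have h1 : IsIdempotentElem (Matrix.toLin' P) := by
    unfold IsIdempotentElem
    rw [Module.End.mul_eq_comp, ← Matrix.toLin'_mul, h]
  have h2 := LinearMap.IsProj.trace (LinearMap.IsIdempotentElem.isProj_range _ h1)
  rw [Matrix.trace_toLin'_eq] at h2
  rw [h2]
  rfl

open scoped ComplexOrder in
lemma isSV1_of_trace {m n : Type*} [Fintype m] [Fintype n] (k : ℕ)
    (A : Matrix m n ℂ) (h : (Aᴴ * A) * (Aᴴ * A) = Aᴴ * A) (ht : (Aᴴ * A).trace = (k : ℂ)) :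
    IsSV1 k A := by
  classical
  refine ⟨h, ?_⟩
  rw [trace_eq_rank_of_idem _ h, Matrix.rank_conjTranspose_mul_self] at ht
  exact_mod_cast ht

lemma matrix_rank_add_le {m n : Type*} [Fintype m] [Fintype n] (A B : Matrix m n ℂ) :
    (A + B).rank ≤ A.rank + B.rank := by
  unfold Matrix.rank
  rw [Matrix.mulVecLin_add]
  exact (Submodule.finrank_mono (LinearMap.range_add_le _ _)).trans
    (Submodule.finrank_add_le_finrank_add_finrank _ _)

lemma matrix_rank_sum_le {m n ι : Type*} [Fintype m] [Fintype n] (s : Finset ι)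
    (A : ι → Matrix m n ℂ) : (∑ i ∈ s, A i).rank ≤ ∑ i ∈ s, (A i).rank := by
  classical
  induction s using Finset.induction_on with
  | empty => simp
  | insert a s ha ih =>
    rw [Finset.sum_insert ha, Finset.sum_insert ha]
    exact (matrix_rank_add_le _ _).trans (Nat.add_le_add_left ih _)

lemma rank_single_kronecker_le {m n ι κ : Type*} [Fintype m] [Fintype n] [Fintype ι]
    [Fintype κ] [DecidableEq ι] [DecidableEq κ] (i : ι) (j : κ) (X : Matrix m n ℂ) :
    (Matrix.single i j (1 : ℂ) ⊗ₖ X).rank ≤ X.rank := by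
  classical
  have : Matrix.single i j (1 : ℂ) ⊗ₖ X =
      (Matrix.of fun (a : ι × m) (y : m) => if a = (i, y) then (1 : ℂ) else 0) *
        (X * (Matrix.of fun (y : n) (a : κ × n) => if a = (j, y) then (1 : ℂ) else 0)) := by
    ext ⟨a, x⟩ ⟨b, y⟩
    simp only [Matrix.mul_apply, Matrix.kroneckerMap_apply, Matrix.single_apply,
      Matrix.of_apply, Prod.mk.injEq, eq_comm (a := i), eq_comm (a := j)]
    by_cases ha : a = i <;> by_cases hb : b = j <;> simp [ha, hb]
  rw [this]
  exact (Matrix.rank_mul_le_right _ _).trans (Matrix.rank_mul_le_left _ _)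

/-! ### Fourier matrices -/

/-- The `(m, r)` entry `exp (2πi m r / k)` of the unnormalised Fourier matrix of order `k`. -/
noncomputable def fourierEntry (k : ℕ) (m r : Fin k) : ℂ :=
  Complex.exp (2 * Real.pi * Complex.I / k) ^ ((m : ℕ) * (r : ℕ))

lemma fourierEntry_comm (k : ℕ) (m r : Fin k) : fourierEntry k m r = fourierEntry k r m := by
  unfold fourierEntry
  rw [mul_comm (m : ℕ)]

lemma star_mul_root (k : ℕ) (hk : k ≠ 0) :
    star (Complex.exp (2 * Real.pi * Complex.I / k)) *
      Complex.exp (2 * Real.pi * Complex.I / k) = 1 := by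
  have h := (Complex.isPrimitiveRoot_exp k hk).norm'_eq_one hk
  rw [Complex.star_def, mul_comm, Complex.mul_conj, Complex.normSq_eq_norm_sq, h]
  simp

lemma star_mul_fourierEntry (k : ℕ) (m r : Fin k) :
    star (fourierEntry k m r) * fourierEntry k m r = 1 := by
  unfold fourierEntry
  rw [star_pow, ← mul_pow, star_mul_root k (Nat.ne_of_gt (lt_of_le_of_lt (Nat.zero_le _) m.2)),
    one_pow]

lemma fourierEntry_orth (k : ℕ) (m m' : Fin k) :
    ∑ r, star (fourierEntry k m r) * fourierEntry k m' r = if m = m' then (k : ℂ) else 0 := by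
  split_ifs with h
  · subst h
    simp only [star_mul_fourierEntry]
    simp
  · have hk : k ≠ 0 := Nat.ne_of_gt (lt_of_le_of_lt (Nat.zero_le _) m.2)
    set z := Complex.exp (2 * Real.pi * Complex.I / k) with hz
    have hp : IsPrimitiveRoot z k := Complex.isPrimitiveRoot_exp k hk
    have hs : star z * z = 1 := star_mul_root k hk
    set w := star (z ^ (m : ℕ)) * z ^ (m' : ℕ) with hw
    have hterm : ∀ r : Fin k, star (fourierEntry k m r) * fourierEntry k m' r = w ^ (r : ℕ) := by
      intro r
      simp only [fourierEntry, hw, mul_pow, ← hz, star_pow, pow_mul]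
    have hwk : w ^ k = 1 := by
      rw [hw, mul_pow, ← star_pow, ← pow_mul, ← pow_mul, mul_comm (m : ℕ), mul_comm (m' : ℕ),
        pow_mul, pow_mul, hp.pow_eq_one]
      simp
    have hw1 : w ≠ 1 := by
      intro h1
      apply h
      have h2 : z ^ (m : ℕ) * star (z ^ (m : ℕ)) = 1 := by
        rw [star_pow, ← mul_pow, mul_comm, hs, one_pow]
      have h3 : z ^ (m' : ℕ) = z ^ (m : ℕ) := by
        calc z ^ (m' : ℕ) = (z ^ (m : ℕ) * star (z ^ (m : ℕ))) * z ^ (m' : ℕ) := by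
              rw [h2, one_mul]
          _ = z ^ (m : ℕ) * w := by rw [hw, mul_assoc]
          _ = _ := by rw [h1, mul_one]
      exact Fin.ext (hp.pow_inj m.2 m'.2 h3.symm)
    rw [Finset.sum_congr rfl fun r _ => hterm r, Fin.sum_univ_eq_sum_range (fun r => w ^ r) k]
    have := mul_neg_geom_sum w k
    rw [hwk, sub_self] at this
    exact (mul_eq_zero.mp this).resolve_left (sub_ne_zero.mpr hw1.symm)

/-- A vector all of whose Fourier coefficients vanish is zero. -/
lemma fourierEntry_inj (k : ℕ) (v : Fin k → ℂ)
    (h : ∀ m, ∑ r, star (fourierEntry k m r) * v r = 0) (r : Fin k) : v r = 0 := by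
  have hk : (k : ℂ) ≠ 0 := by
    exact_mod_cast Nat.ne_of_gt (lt_of_le_of_lt (Nat.zero_le _) r.2)
  have h1 : ∑ m, fourierEntry k m r * ∑ r', star (fourierEntry k m r') * v r' = 0 := by
    simp only [h, mul_zero, Finset.sum_const_zero]
  have h2 : ∑ m, fourierEntry k m r * ∑ r', star (fourierEntry k m r') * v r' = k * v r := by
    simp only [Finset.mul_sum]
    rw [Finset.sum_comm]
    have : ∀ r', ∑ m, fourierEntry k m r * (star (fourierEntry k m r') * v r') =
        (if r' = r then (k : ℂ) else 0) * v r' := by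
      intro r'
      rw [← fourierEntry_orth, Finset.sum_mul]
      refine Finset.sum_congr rfl fun m _ => ?_
      rw [fourierEntry_comm k r' m, fourierEntry_comm k r m]
      ring
    simp only [this]
    simp
  rw [h2] at h1
  exact (mul_eq_zero.mp h1).resolve_left hk

/-! ### Phased partial permutation matrices -/

/-- The matrix carrying the weight `F r` at the position `u r`, for each `r`
(weights at coinciding positions add up). -/
noncomputable def phased {k : ℕ} {ι κ : Type*} [DecidableEq ι] [DecidableEq κ]
    (u : Fin k → ι × κ) (F : Fin k → ℂ) : Matrix ι κ ℂ :=
  ∑ r, Matrix.single (u r).1 (u r).2 (F r)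

section phased

variable {k : ℕ} {ι κ : Type*} [DecidableEq ι] [DecidableEq κ]

lemma phased_conjTranspose (u : Fin k → ι × κ) (F : Fin k → ℂ) :
    (phased u F)ᴴ = ∑ r, Matrix.single (u r).2 (u r).1 (star (F r)) := by
  simp [phased, Matrix.conjTranspose_sum, Matrix.conjTranspose_single]

variable [Fintype ι] [Fintype κ]

/-- Pairing `phased u F ⊗ X` with `B` is a weighted sum of the pairings of `X` with the blocks
of `B` at the positions `u r`. -/
lemma trace_phased_kronecker {m n : Type*} [Fintype m] [Fintype n] (u : Fin k → ι × κ)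
    (F : Fin k → ℂ) (X : Matrix m n ℂ) (B : Matrix (ι × m) (κ × n) ℂ) :
    ((phased u F ⊗ₖ X)ᴴ * B).trace =
      ∑ r, star (F r) *
        (Xᴴ * Matrix.of fun x y => B ((u r).1, x) ((u r).2, y)).trace := by
  simp only [Matrix.conjTranspose_kronecker, phased_conjTranspose, Matrix.trace, Matrix.diag,
    Matrix.mul_apply, Matrix.kroneckerMap_apply, Matrix.sum_apply, Matrix.single_apply,
    Fintype.sum_prod_type, Finset.sum_mul, Finset.mul_sum, Matrix.of_apply]
  calc _ = ∑ r, ∑ b, ∑ y, ∑ a, ∑ x, (if (u r).2 = b ∧ (u r).1 = a then star (F r) else 0) *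
          Xᴴ y x * B (a, x) (b, y) := by
        rw [Finset.sum_congr rfl fun b _ => Finset.sum_congr rfl fun y _ =>
          Finset.sum_congr rfl fun a _ => Finset.sum_comm]
        rw [Finset.sum_congr rfl fun b _ => Finset.sum_congr rfl fun y _ => Finset.sum_comm]
        rw [Finset.sum_congr rfl fun b _ => Finset.sum_comm]
        rw [Finset.sum_comm]
    _ = _ := by
        refine Finset.sum_congr rfl fun r _ => ?_
        rw [Finset.sum_eq_single (u r).2 (by intro b _ hb; simp [hb.symm]) (by simp)]
        refine Finset.sum_congr rfl fun y _ => ?_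
        rw [Finset.sum_eq_single (u r).1 (by intro b _ hb; simp [hb.symm]) (by simp)]
        simp [mul_assoc]

lemma trace_phased (u : Fin k → ι × κ) (F : Fin k → ℂ) (B : Matrix ι κ ℂ) :
    ((phased u F)ᴴ * B).trace = ∑ r, star (F r) * B (u r).1 (u r).2 := by
  rw [phased_conjTranspose, Matrix.sum_mul, Matrix.trace_sum]
  refine Finset.sum_congr rfl fun r _ => ?_
  simp [Matrix.trace_single_mul]

lemma phased_idem (u : Fin k → ι × κ) (F : Fin k → ℂ)
    (h1 : Function.Injective fun r => (u r).1) (h2 : Function.Injective fun r => (u r).2)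
    (hF : ∀ r, star (F r) * F r = 1) :
    ((phased u F)ᴴ * phased u F) * ((phased u F)ᴴ * phased u F) =
      (phased u F)ᴴ * phased u F := by
  have key : (phased u F)ᴴ * phased u F = ∑ r, Matrix.single (u r).2 (u r).2 (1 : ℂ) := by
    rw [phased_conjTranspose, phased, Matrix.sum_mul]
    refine Finset.sum_congr rfl fun r _ => ?_
    rw [Matrix.mul_sum, Finset.sum_eq_single r]
    · rw [Matrix.single_mul_single_same, hF]
    · intro r' _ hr
      exact Matrix.single_mul_single_of_ne _ _ _ _ (fun h => hr (h1 h).symm) _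
    · simp
  rw [key, Finset.sum_mul_sum]
  refine Finset.sum_congr rfl fun r _ => ?_
  rw [Finset.sum_eq_single r]
  · rw [Matrix.single_mul_single_same, one_mul]
  · intro r' _ hr
    exact Matrix.single_mul_single_of_ne _ _ _ _ (fun h => hr (h2 h).symm) _
  · simp

/-- For a partition `σ` of the grid `ι × κ` into blocks of `k` cells, the phased matrices
supported on single blocks, with Fourier phases, are orthogonal. -/
lemma phased_orth {n : ℕ} (σ : Fin n × Fin k ≃ ι × κ) (b b' : Fin n) (m m' : Fin k) :
    ((phased (fun r => σ (b, r)) (fourierEntry k m))ᴴ *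
      phased (fun r => σ (b', r)) (fourierEntry k m')).trace =
      if (b, m) = (b', m') then (k : ℂ) else 0 := by
  rw [trace_phased]
  have : ∀ r, phased (fun r => σ (b', r)) (fourierEntry k m') (σ (b, r)).1 (σ (b, r)).2 =
      if b = b' then fourierEntry k m' r else 0 := by
    intro r
    simp only [phased, Matrix.sum_apply, Matrix.single_apply, ← Prod.ext_iff,
      EmbeddingLike.apply_eq_iff_eq, Prod.mk.injEq]
    split_ifs with h
    · simp [h]
    · simp [Ne.symm h]
  simp only [this]
  by_cases h : b = b'
  · simp only [h, if_true, fourierEntry_orth, Prod.mk.injEq, true_and]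
  · simp [h]

/-- The matrices `phased (fun r => σ (b, r)) (fourierEntry k m)` span: only `0` is orthogonal to
all of them. -/
lemma phased_span {n : ℕ} (σ : Fin n × Fin k ≃ ι × κ) (B : Matrix ι κ ℂ)
    (h : ∀ b m, ((phased (fun r => σ (b, r)) (fourierEntry k m))ᴴ * B).trace = 0) : B = 0 := by
  ext i j
  obtain ⟨⟨b, r⟩, hb⟩ := σ.surjective (i, j)
  have := fourierEntry_inj k (fun r => B (σ (b, r)).1 (σ (b, r)).2)
    (fun m => by rw [← h b m, trace_phased]) r
  simpa [hb] using this

end phased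

/-! ### Partitions of a grid into matchings -/

/-- If `1 ≤ k ≤ d ≤ d'` and `n * k = d * d'`, the cells of a `d × d'` grid split into `n` sets of
`k` cells each, no two cells of a set sharing a row or a column. The cells are listed along the
cyclic diagonals `(i, i + s mod d')`, one diagonal after the other, and cut into runs of
length `k`. -/
lemma exists_partition (n k d d' : ℕ) (hk : 1 ≤ k) (hkd : k ≤ d) (hdd : d ≤ d')
    (hn : n * k = d * d') :
    ∃ σ : Fin n × Fin k ≃ Fin d × Fin d', ∀ b,
      (Function.Injective fun r => (σ (b, r)).1) ∧
      (Function.Injective fun r => (σ (b, r)).2) := by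
  have hd : 0 < d := by omega
  have hd' : 0 < d' := by omega
  -- the `t`-th cell, `t = d * s + i`, is `(i, i + s mod d')`
  let c : ℕ → Fin d × Fin d' := fun t =>
    (⟨t % d, Nat.mod_lt _ hd⟩, ⟨(t % d + t / d) % d', Nat.mod_lt _ hd'⟩)
  let f : Fin n × Fin k → Fin d × Fin d' := fun x => c (k * x.1 + x.2)
  have hlt : ∀ x : Fin n × Fin k, k * (x.1 : ℕ) + x.2 < d * d' := by
    rintro ⟨b, r⟩
    have h1 : k * ((b : ℕ) + 1) ≤ k * n := Nat.mul_le_mul_left _ b.2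
    have := r.2
    rw [← hn, mul_comm n k]
    simp only
    nlinarith
  have hinj : Function.Injective f := by
    intro x y hxy
    have hx := hlt x
    have hy := hlt y
    set t := k * (x.1 : ℕ) + x.2 with ht
    set t' := k * (y.1 : ℕ) + y.2 with ht'
    have e1 : t % d = t' % d := congrArg (fun z => (z.1 : ℕ)) hxy
    have e2 : (t % d + t / d) % d' = (t' % d + t' / d) % d' :=
      congrArg (fun z => (z.2 : ℕ)) hxy
    have s1 : t / d < d' := Nat.div_lt_of_lt_mul hx
    have s2 : t' / d < d' := Nat.div_lt_of_lt_mul hy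
    rw [e1] at e2
    have e3 : t / d = t' / d := by
      have := Nat.ModEq.add_left_cancel' (t' % d) e2
      exact Nat.ModEq.eq_of_lt_of_lt this s1 s2
    have e4 : t = t' := by rw [← Nat.div_add_mod t d, ← Nat.div_add_mod t' d, e1, e3]
    have b1 : (x.1 : ℕ) = y.1 := by
      have h1 : t / k = x.1 := by
        rw [ht, Nat.mul_add_div hk, Nat.div_eq_of_lt x.2.2, add_zero]
      have h2 : t' / k = y.1 := by
        rw [ht', Nat.mul_add_div hk, Nat.div_eq_of_lt y.2.2, add_zero]
      rw [← h1, ← h2, e4]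
    have b2 : (x.2 : ℕ) = y.2 := by
      rw [ht, ht', b1] at e4
      omega
    exact Prod.ext (Fin.ext b1) (Fin.ext b2)
  have hbij : Function.Bijective f :=
    (Fintype.bijective_iff_injective_and_card f).2 ⟨hinj, by simp [hn]⟩
  -- two cells in the same run, the first one strictly before the second, differ in both coordinates
  have key : ∀ b r r' : ℕ, r < r' → r' < k →
      (c (k * b + r)).1 ≠ (c (k * b + r')).1 ∧ (c (k * b + r)).2 ≠ (c (k * b + r')).2 := by
    intro b r r' hr hr'
    set t := k * b + r with ht
    set t' := k * b + r' with ht'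
    have q1 := Nat.div_add_mod t d
    have q2 := Nat.div_add_mod t' d
    have l1 := Nat.mod_lt t hd
    have l2 := Nat.mod_lt t' hd
    have hs : t' / d = t / d ∨ t' / d = t / d + 1 := by
      have a1 : t / d ≤ t' / d := Nat.div_le_div_right (by omega)
      have a2 : t' / d ≤ (t + d) / d := Nat.div_le_div_right (by omega)
      rw [Nat.add_div_right _ hd] at a2
      omega
    constructor
    · intro h
      have e1 : t % d = t' % d := congrArg Fin.val h
      rcases hs with h1 | h1
      · rw [h1] at q2
        omega
      · rw [h1, mul_add] at q2
        omega
    · intro h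
      have e2 : (t % d + t / d) % d' = (t' % d + t' / d) % d' := congrArg Fin.val h
      rcases hs with h1 | h1
      · rw [h1] at q2 e2
        have := Nat.ModEq.eq_of_lt_of_lt (Nat.ModEq.add_right_cancel' (t / d) e2)
          (by omega) (by omega)
        omega
      · rw [h1, mul_add] at q2
        -- the run crosses into the next diagonal; for `k = d` runs are exactly the diagonals
        have hkd' : k < d := by
          rcases hkd.lt_or_eq with h' | h'
          · exact h'
          · exfalso
            rw [← h', ht', ht, Nat.mul_add_div hk, Nat.mul_add_div hk, Nat.div_eq_of_lt hr',
              Nat.div_eq_of_lt (hr.trans hr')] at h1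
            omega
        rw [h1, ← add_assoc, add_right_comm] at e2
        have := Nat.ModEq.eq_of_lt_of_lt (Nat.ModEq.add_right_cancel' (t / d) e2)
          (by omega) (by omega)
        omega
  refine ⟨Equiv.ofBijective f hbij, fun b => ⟨?_, ?_⟩⟩
  · intro r r' h
    by_contra hne
    rcases lt_or_gt_of_ne hne with h' | h'
    · exact (key b r r' h' r'.2).1 h
    · exact (key b r' r h' r.2).1 h.symm
  · intro r r' h
    by_contra hne
    rcases lt_or_gt_of_ne hne with h' | h'
    · exact (key b r r' h' r'.2).2 h
    · exact (key b r' r h' r.2).2 h.symm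

/-! ### Kronecker products and the construction -/

lemma kronecker_idem {m n ι κ : Type*} [Fintype m] [Fintype n] [Fintype ι] [Fintype κ]
    (W : Matrix ι κ ℂ) (X : Matrix m n ℂ)
    (hW : (Wᴴ * W) * (Wᴴ * W) = Wᴴ * W) (hX : (Xᴴ * X) * (Xᴴ * X) = Xᴴ * X) :
    ((W ⊗ₖ X)ᴴ * (W ⊗ₖ X)) * ((W ⊗ₖ X)ᴴ * (W ⊗ₖ X)) = (W ⊗ₖ X)ᴴ * (W ⊗ₖ X) := by
  rw [Matrix.conjTranspose_kronecker, ← Matrix.mul_kronecker_mul, ← Matrix.mul_kronecker_mul,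
    hW, hX]

lemma kronecker_trace {m n ι κ : Type*} [Fintype m] [Fintype n] [Fintype ι] [Fintype κ]
    (W W' : Matrix ι κ ℂ) (X X' : Matrix m n ℂ) :
    ((W ⊗ₖ X)ᴴ * (W' ⊗ₖ X')).trace = (Wᴴ * W').trace * (Xᴴ * X').trace := by
  rw [Matrix.conjTranspose_kronecker, ← Matrix.mul_kronecker_mul, Matrix.trace_kronecker]

/-- A family on arbitrary finite index types, with row and column indices in product form, can be
transported to the index types `Fin M`, `Fin (p * d)`, `Fin (q * d')`. -/
lemma transport {ι : Type*} [Fintype ι] [DecidableEq ι] (M K p q d d' : ℕ)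
    (hM : Fintype.card ι = M)
    (C : ι → Matrix (Fin p × Fin d) (Fin q × Fin d') ℂ)
    (hI : ∀ x, ((C x)ᴴ * C x) * ((C x)ᴴ * C x) = (C x)ᴴ * C x)
    (hO : ∀ x y, ((C x)ᴴ * C y).trace = if x = y then (K : ℂ) else 0)
    (hB : ∀ B : Matrix (Fin p × Fin d) (Fin q × Fin d') ℂ,
      (∀ x, ((C x)ᴴ * B).trace = 0) → B.rank < K) :
    ∃ C : Fin M → Matrix (Fin (p * d)) (Fin (q * d')) ℂ,
      (∀ x, IsSV1 K (C x)) ∧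
      (∀ x y, ((C x)ᴴ * C y).trace = if x = y then (K : ℂ) else 0) ∧
      (∀ B : Matrix (Fin (p * d)) (Fin (q * d')) ℂ,
        (∀ x, ((C x)ᴴ * B).trace = 0) → ¬ IsSV1 K B) := by
  let e := Fintype.equivFinOfCardEq hM
  let f : Fin (p * d) ≃ Fin p × Fin d := finProdFinEquiv.symm
  let g : Fin (q * d') ≃ Fin q × Fin d' := finProdFinEquiv.symm
  have htr : ∀ X : Matrix (Fin q × Fin d') (Fin q × Fin d') ℂ,
      (X.submatrix g g).trace = X.trace := fun X => by
    simp only [Matrix.trace, Matrix.diag, Matrix.submatrix_apply]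
    exact Equiv.sum_comp g (fun i => X i i)
  have hmul : ∀ X Y : Matrix (Fin p × Fin d) (Fin q × Fin d') ℂ,
      (X.submatrix f g)ᴴ * Y.submatrix f g = (Xᴴ * Y).submatrix g g := fun X Y => by
    rw [Matrix.conjTranspose_submatrix, Matrix.submatrix_mul_equiv]
  have hO' : ∀ x y, (((C (e.symm x)).submatrix f g)ᴴ * (C (e.symm y)).submatrix f g).trace =
      if x = y then (K : ℂ) else 0 := fun x y => by
    rw [hmul, htr, hO]
    simp
  refine ⟨fun x => (C (e.symm x)).submatrix f g, fun x => ?_, hO', fun B hBx hS => ?_⟩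
  · refine isSV1_of_trace _ _ ?_ (by simpa using hO' x x)
    rw [hmul, Matrix.submatrix_mul_equiv, hI]
  · have h1 : (B.submatrix f.symm g.symm).submatrix f g = B := by simp
    have h2 := hB (B.submatrix f.symm g.symm) (fun x => by
      have h3 := hBx (e x)
      simp only [Equiv.symm_apply_apply] at h3
      rw [← htr, ← hmul, h1, h3])
    rw [Matrix.rank_submatrix, hS.2] at h2
    exact lt_irrefl _ h2

/-- Theorem 4.1: from an `N`-number USV1Bk in `M_{d×d'}` (with the
stronger unextendibility property that every matrix orthogonal to the family has rank
`< k`), with `k ∣ d·d'` and `1 ≤ p ≤ q`, one obtains a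
`(pqdd' - p(dd'-N))`-number USV1B(pk) in `M_{pd×qd'}`. -/
theorem suebpk_from_suebk (k d d' p q N : ℕ)
    (hk : 2 ≤ k) (hkd : k ≤ d) (hdd : d ≤ d') (hdvd : k ∣ d * d')
    (hp : 1 ≤ p) (hpq : p ≤ q) (hN : N < d * d')
    (A : Fin N → Matrix (Fin d) (Fin d') ℂ)
    (hSV1 : ∀ j, IsSV1 k (A j))
    (horth : ∀ i j, ((A i)ᴴ * A j).trace = if i = j then (k : ℂ) else 0)
    (hstrong : ∀ B : Matrix (Fin d) (Fin d') ℂ,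
      (∀ j, ((A j)ᴴ * B).trace = 0) → B.rank < k) :
    ∃ C : Fin (p * q * d * d' - p * (d * d' - N)) →
        Matrix (Fin (p * d)) (Fin (q * d')) ℂ,
      (∀ x, IsSV1 (p * k) (C x)) ∧
      (∀ x y, ((C x)ᴴ * C y).trace = if x = y then ((p * k : ℕ) : ℂ) else 0) ∧
      (∀ B : Matrix (Fin (p * d)) (Fin (q * d')) ℂ,
        (∀ x, ((C x)ᴴ * B).trace = 0) → ¬ IsSV1 (p * k) B) := by
  obtain ⟨n, hn⟩ := hdvd
  obtain ⟨τ, hτ⟩ := exists_partition n k d d' (by omega) hkd hdd (by rw [hn, mul_comm])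
  obtain ⟨σ, hσ⟩ := exists_partition q p p q hp le_rfl hpq (mul_comm _ _)
  let s₀ : Fin q := ⟨0, by omega⟩
  let W : Fin q → Fin p → Matrix (Fin p) (Fin q) ℂ :=
    fun s m => phased (fun r => σ (s, r)) (fourierEntry p m)
  let E : Fin n → Fin k → Matrix (Fin d) (Fin d') ℂ :=
    fun b l => phased (fun r => τ (b, r)) (fourierEntry k l)
  have hWI : ∀ s m, ((W s m)ᴴ * W s m) * ((W s m)ᴴ * W s m) = (W s m)ᴴ * W s m := fun s m =>
    phased_idem _ _ (hσ s).1 (hσ s).2 (star_mul_fourierEntry p m)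
  have hEI : ∀ s m, ((E s m)ᴴ * E s m) * ((E s m)ᴴ * E s m) = (E s m)ᴴ * E s m := fun s m =>
    phased_idem _ _ (hτ s).1 (hτ s).2 (star_mul_fourierEntry k m)
  have hWO : ∀ s s' m m', ((W s m)ᴴ * W s' m').trace =
      if (s, m) = (s', m') then (p : ℂ) else 0 := phased_orth σ
  have hEO : ∀ s s' m m', ((E s m)ᴴ * E s' m').trace =
      if (s, m) = (s', m') then (k : ℂ) else 0 := phased_orth τ
  let C : (Fin p × Fin N) ⊕ (({s : Fin q // s ≠ s₀} × Fin p) × (Fin n × Fin k)) →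
      Matrix (Fin p × Fin d) (Fin q × Fin d') ℂ :=
    Sum.elim (fun x => W s₀ x.1 ⊗ₖ A x.2) (fun x => W x.1.1 x.1.2 ⊗ₖ E x.2.1 x.2.2)
  refine transport _ (p * k) p q d d' ?_ C ?_ ?_ ?_
  · have hc : Fintype.card {s : Fin q // s ≠ s₀} = q - 1 := by
      rw [Fintype.card_subtype_compl]
      simp
    simp only [Fintype.card_sum, Fintype.card_prod, Fintype.card_fin, hc]
    obtain ⟨q', rfl⟩ : ∃ q', q = q' + 1 := ⟨q - 1, by omega⟩
    obtain ⟨e, he⟩ : ∃ e, d * d' = N + e := ⟨d * d' - N, by omega⟩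
    have h1 : n * k = N + e := by rw [← he, hn, mul_comm]
    have h2 : p * (q' + 1) * d * d' = p * (q' + 1) * (N + e) := by rw [← he]; ring
    rw [h1, h2, he, Nat.add_sub_cancel_left, Nat.add_sub_cancel]
    refine (Nat.sub_eq_of_eq_add ?_).symm
    ring
  · rintro (⟨m, j⟩ | ⟨⟨s, m⟩, b, l⟩)
    · exact kronecker_idem _ _ (hWI _ _) (hSV1 j).1
    · exact kronecker_idem _ _ (hWI _ _) (hEI _ _)
  · rintro (⟨m, j⟩ | ⟨⟨s, m⟩, b, l⟩) (⟨m', j'⟩ | ⟨⟨s', m'⟩, b', l'⟩)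
    · simp only [C, Sum.elim_inl, kronecker_trace, hWO, horth]
      by_cases h1 : m = m' <;> by_cases h2 : j = j' <;> simp [h1, h2]
    · simp only [C, Sum.elim_inl, Sum.elim_inr, kronecker_trace, hWO]
      simp [s'.2.symm]
    · simp only [C, Sum.elim_inl, Sum.elim_inr, kronecker_trace, hWO]
      simp [s.2]
    · simp only [C, Sum.elim_inr, kronecker_trace, hWO, hEO]
      by_cases h1 : s = s' <;> by_cases h2 : m = m' <;> by_cases h3 : b = b' <;>
        by_cases h4 : l = l' <;> simp [h1, h2, h3, h4, Subtype.coe_inj]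
  · intro B hB
    -- the `d × d'` block of `B` at a cell of the `p × q` grid
    let blk : Fin p × Fin q → Matrix (Fin d) (Fin d') ℂ :=
      fun c => Matrix.of fun x y => B (c.1, x) (c.2, y)
    have h0 : ∀ s, s ≠ s₀ → ∀ r, blk (σ (s, r)) = 0 := fun s hs r =>
      phased_span τ _ fun b l =>
        fourierEntry_inj p (fun r => ((E b l)ᴴ * blk (σ (s, r))).trace)
          (fun m => by
            have := hB (Sum.inr ((⟨s, hs⟩, m), (b, l)))
            simp only [C, Sum.elim_inr, W, trace_phased_kronecker] at this
            exact this) r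
    have h1 : ∀ r, (blk (σ (s₀, r))).rank < k := fun r =>
      hstrong _ fun j =>
        fourierEntry_inj p (fun r => ((A j)ᴴ * blk (σ (s₀, r))).trace)
          (fun m => by
            have := hB (Sum.inl (m, j))
            simp only [C, Sum.elim_inl, W, trace_phased_kronecker] at this
            exact this) r
    have hdec : B = ∑ r, Matrix.single (σ (s₀, r)).1 (σ (s₀, r)).2 (1 : ℂ) ⊗ₖ
        blk (σ (s₀, r)) := by
      ext ⟨a, x⟩ ⟨b, y⟩
      obtain ⟨⟨s, r⟩, hsr⟩ := σ.surjective (a, b)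
      have hv : B (a, x) (b, y) = blk (σ (s, r)) x y := by rw [hsr]; rfl
      rw [hv, Matrix.sum_apply]
      have hterm : ∀ r', (Matrix.single (σ (s₀, r')).1 (σ (s₀, r')).2 (1 : ℂ) ⊗ₖ
          blk (σ (s₀, r'))) (a, x) (b, y) =
          if s₀ = s ∧ r' = r then blk (σ (s, r)) x y else 0 := by
        intro r'
        have hiff : ((σ (s₀, r')).1 = a ∧ (σ (s₀, r')).2 = b) ↔ (s₀ = s ∧ r' = r) := by
          rw [← Prod.mk.injEq s₀, ← σ.apply_eq_iff_eq, hsr, Prod.ext_iff]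
        rw [Matrix.kroneckerMap_apply, Matrix.single_apply]
        simp only [hiff]
        split_ifs with h
        · rw [h.1, h.2, one_mul]
        · rw [zero_mul]
      simp only [hterm]
      by_cases hs : s = s₀
      · simp [hs]
      · simp [h0 s hs r]
    calc B.rank ≤ ∑ r, (blk (σ (s₀, r))).rank := by
          conv_lhs => rw [hdec]
          exact (matrix_rank_sum_le _ _).trans
            (Finset.sum_le_sum fun r _ => rank_single_kronecker_le _ _ _)
      _ < ∑ _r : Fin p, k :=
          Finset.sum_lt_sum_of_nonempty ⟨⟨0, hp⟩, Finset.mem_univ _⟩ fun r _ => h1 r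
      _ = p * k := by simp
end
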